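/- arXiv:1811.08477 — 2 statements merged into one kernel-verified Lean document; each statement's English description precedes it below -/
import Mathlib

section
/- Let d ≥ 1, let ν be a rotationally symmetric Borel measure on ℝ^d with ν({0}) = 0, let x, y ∈ ℝ^d with x ≠ y, and let η ∈ (0, ∞]. Then the Borel measure on ℝ^d × ℝ^d defined by ν̃ := (ν restricted to {z : |z| ≤ η·|x−y|}).map(z ↦ (z, R_{x,y}(z))) + (ν restricted to {z : |z| > η·|x−y|}).map(z ↦ (z,z)) has both marginals equal to ν, i.e. ν̃(A × ℝ^d) = ν(A) and ν̃(ℝ^d × B) = ν(B) for all Borel sets A, B ⊆ ℝ^d. (This says that the coupling-by-reflection jump system defines a coupling operator.) -/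
open MeasureTheory
open scoped RealInnerProductSpace ENNReal

/-- The reflection `R_{x,y}(z) = z - (2⟨x-y,z⟩/|x-y|²)(x-y)`. -/
noncomputable def reflect {d : ℕ} (x y z : EuclideanSpace ℝ (Fin d)) :
    EuclideanSpace ℝ (Fin d) :=
  z - (2 * ⟪x - y, z⟫ / ‖x - y‖ ^ 2) • (x - y)

/-!
A map preserving both `ν` and the norm also preserves the restriction of `ν` to any closed ball
around the origin. Moving that part of `ν` by the map and leaving the rest in place therefore
changes nothing in the second marginal, and `R_{x,y}` is such a map, being the orthogonal reflection
in the hyperplane `(x - y)ᗮ`.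
-/

section JumpCoupling

variable {α : Type*} [MeasurableSpace α] {μ : Measure α} {T : α → α} {s : Set α}

/-- The coupling of `μ` with itself in which a jump `z` of the first coordinate is matched with the
jump `T z` of the second if `z ∈ s`, and with `z` itself otherwise. As `Measure.map` is zero along
maps that are not a.e. measurable, it is meant for measurable `T`. -/
noncomputable def jumpCoupling (μ : Measure α) (T : α → α) (s : Set α) : Measure (α × α) :=
  (μ.restrict s).map (fun z => (z, T z)) + (μ.restrict sᶜ).map (fun z => (z, z))

theorem fst_jumpCoupling (hT : Measurable T) (hs : MeasurableSet s) :
    (jumpCoupling μ T s).fst = μ := by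
  rw [jumpCoupling, Measure.fst_add, Measure.fst_map_prodMk hT,
    Measure.fst_map_prodMk measurable_id', Measure.map_id', Measure.map_id',
    Measure.restrict_add_restrict_compl hs]

theorem snd_jumpCoupling (hT : MeasurePreserving T (μ.restrict s) (μ.restrict s))
    (hs : MeasurableSet s) : (jumpCoupling μ T s).snd = μ := by
  rw [jumpCoupling, Measure.snd_add, Measure.snd_map_prodMk measurable_id',
    Measure.snd_map_prodMk measurable_id', hT.map_eq, Measure.map_id',
    Measure.restrict_add_restrict_compl hs]

end JumpCoupling

theorem reflect_eq_reflection {d : ℕ} (x y : EuclideanSpace ℝ (Fin d)) :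
    reflect x y = (ℝ ∙ (x - y))ᗮ.reflection := by
  ext1 z
  rw [Submodule.reflection_orthogonal_apply, Submodule.reflection_singleton_apply, neg_sub,
    reflect, mul_div_assoc, mul_smul, ofNat_smul_eq_nsmul, RCLike.ofReal_real_eq_id, id_eq]

theorem stmt_7_general {E : Type*} [SeminormedAddCommGroup E] [MeasurableSpace E]
    [OpensMeasurableSpace E] {ν : Measure E} {T : E → E} (hT : MeasurePreserving T ν ν)
    (hnorm : ∀ z, ‖T z‖ₑ = ‖z‖ₑ) (r : ℝ≥0∞) {A B : Set E}
    (hA : MeasurableSet A) (hB : MeasurableSet B) :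
    jumpCoupling ν T {z | ‖z‖ₑ ≤ r} (A ×ˢ Set.univ) = ν A ∧
      jumpCoupling ν T {z | ‖z‖ₑ ≤ r} (Set.univ ×ˢ B) = ν B := by
  have measurableSet_ball : MeasurableSet {z : E | ‖z‖ₑ ≤ r} :=
    measurableSet_le measurable_enorm measurable_const
  have preimage_ball : T ⁻¹' {z | ‖z‖ₑ ≤ r} = {z | ‖z‖ₑ ≤ r} := by
    simp only [Set.preimage_ofPred_eq, hnorm]
  have hT_ball : MeasurePreserving T (ν.restrict {z | ‖z‖ₑ ≤ r}) (ν.restrict {z | ‖z‖ₑ ≤ r}) := by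
    simpa only [preimage_ball] using hT.restrict_preimage measurableSet_ball
  rw [Set.prod_univ, Set.univ_prod, ← Measure.fst_apply hA, ← Measure.snd_apply hB,
    fst_jumpCoupling hT.measurable measurableSet_ball, snd_jumpCoupling hT_ball measurableSet_ball]
  exact ⟨rfl, rfl⟩

/-- The coupling-by-reflection jump system defines a coupling operator: for a rotationally
symmetric measure `ν` with `ν{0} = 0`, `x ≠ y` and a threshold `η ∈ (0,∞]`, the measure
`ν̃ = (ν|_{|z| ≤ η|x-y|}).map (z ↦ (z, R_{x,y}(z))) + (ν|_{|z| > η|x-y|}).map (z ↦ (z,z))`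
on `ℝ^d × ℝ^d` has both marginals equal to `ν`. -/
theorem stmt_7 {d : ℕ} (hd : 1 ≤ d) (ν : Measure (EuclideanSpace ℝ (Fin d)))
    (hν0 : ν {0} = 0)
    (hrot : ∀ U : EuclideanSpace ℝ (Fin d) ≃ₗᵢ[ℝ] EuclideanSpace ℝ (Fin d),
      ν.map U = ν)
    (x y : EuclideanSpace ℝ (Fin d)) (hxy : x ≠ y) (η : ℝ≥0∞) (hη : 0 < η) :
    ∀ A B : Set (EuclideanSpace ℝ (Fin d)), MeasurableSet A → MeasurableSet B →
      ((ν.restrict {z | (‖z‖₊ : ℝ≥0∞) ≤ η * (‖x - y‖₊ : ℝ≥0∞)}).map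
          (fun z => (z, reflect x y z))
        + (ν.restrict {z | η * (‖x - y‖₊ : ℝ≥0∞) < (‖z‖₊ : ℝ≥0∞)}).map
          (fun z => (z, z)))
        (A ×ˢ Set.univ) = ν A ∧
      ((ν.restrict {z | (‖z‖₊ : ℝ≥0∞) ≤ η * (‖x - y‖₊ : ℝ≥0∞)}).map
          (fun z => (z, reflect x y z))
        + (ν.restrict {z | η * (‖x - y‖₊ : ℝ≥0∞) < (‖z‖₊ : ℝ≥0∞)}).map
          (fun z => (z, z)))
        (Set.univ ×ˢ B) = ν B := by
  simp only [← not_le, reflect_eq_reflection]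
  exact fun A B => stmt_7_general ⟨(LinearIsometryEquiv.continuous _).measurable, hrot _⟩
    (LinearIsometryEquiv.enorm_map _) _
end

section
/- Let d ≥ 1, let ν be a Lévy measure on ℝ^d, let κ > 0, and let w ∈ ℝ^d with w ≠ 0; set w_κ := min(1, κ/|w|)·w. Then (1/2)·μ_{−w_κ} + (1/2)·μ_{w_κ} ≤ ν, and the Borel measure on ℝ^d × ℝ^d defined by ν̃ := ((1/2)·μ_{−w_κ}).map(z ↦ (z, z + w_κ)) + ((1/2)·μ_{w_κ}).map(z ↦ (z, z − w_κ)) + (ν − (1/2)·μ_{−w_κ} − (1/2)·μ_{w_κ}).map(z ↦ (z,z)) has both marginals equal to ν, i.e. ν̃(A × ℝ^d) = ν(A) and ν̃(ℝ^d × B) = ν(B) for all Borel sets A, B ⊆ ℝ^d. (This says that the refined basic coupling jump system defines a coupling operator.) -/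
open MeasureTheory
open scoped ENNReal

/-- `μ_w = ν ⊓ (δ_w * ν)`, where `δ_w * ν` is the pushforward of `ν` under `z ↦ z + w`. -/
noncomputable def muTrans {d : ℕ} (ν : Measure (EuclideanSpace ℝ (Fin d)))
    (w : EuclideanSpace ℝ (Fin d)) : Measure (EuclideanSpace ℝ (Fin d)) :=
  ν ⊓ ν.map (fun z => z + w)

/-!
The overlaps `ν ⊓ ν.map e.symm` and `ν ⊓ ν.map e` are carried to one another by `e` and `e.symm`,
because pushforward along a measurable equivalence is an isomorphism of the lattice of measures.
Passing from the first marginal of the coupling to the second therefore only exchanges the two jump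
parts, so both marginals equal `a + b + (ν - a - b)`, where `a` and `b` are the halved overlaps.
This sum is `ν`: on a set of infinite `a + b` measure both sides are infinite, and on any other set
the restrictions of `a` and `b` are finite and can be cancelled.
-/

section Subtraction

variable {α : Type*} [MeasurableSpace α] {μ a b : Measure α}

theorem le_measure_sub_of_add_le [IsFiniteMeasure a] (h : a + b ≤ μ) : b ≤ μ - a := by
  have ha : a ≤ μ := (Measure.le_add_right le_rfl).trans h
  refine Measure.le_of_add_le_add_left (μ := a) ?_
  rwa [add_comm a (μ - a), Measure.sub_add_cancel_of_le ha]

theorem measure_add_add_sub_sub_of_le_of_isFiniteMeasure [IsFiniteMeasure a] [IsFiniteMeasure b]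
    (h : a + b ≤ μ) : a + b + (μ - a - b) = μ := by
  have ha : a ≤ μ := (Measure.le_add_right le_rfl).trans h
  calc
    a + b + (μ - a - b) = μ - a - b + b + a := by
      rw [add_comm, add_comm a, ← add_assoc]
    _ = μ - a + a := by
      rw [Measure.sub_add_cancel_of_le (le_measure_sub_of_add_le h)]
    _ = μ := Measure.sub_add_cancel_of_le ha

theorem measure_add_add_sub_sub_of_le (h : a + b ≤ μ) : a + b + (μ - a - b) = μ := by
  ext s hs
  by_cases hfin : (a + b) s = ∞
  · have hμ : μ s = ∞ := top_unique (hfin ▸ h s)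
    rw [Measure.add_apply, hfin, hμ, top_add]
  · obtain ⟨has, hbs⟩ := ENNReal.add_ne_top.1 hfin
    have : IsFiniteMeasure (a.restrict s) := isFiniteMeasure_restrict.2 has
    have : IsFiniteMeasure (b.restrict s) := isFiniteMeasure_restrict.2 hbs
    have hrestrict : a.restrict s + b.restrict s ≤ μ.restrict s := by
      rw [← Measure.restrict_add]
      exact Measure.restrict_mono le_rfl h
    have hcancel : (a + b + (μ - a - b)).restrict s = μ.restrict s := by
      simp only [Measure.restrict_add, Measure.restrict_sub_eq_restrict_sub_restrict hs]
      exact measure_add_add_sub_sub_of_le_of_isFiniteMeasure hrestrict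
    rw [← Measure.restrict_apply_self, hcancel, Measure.restrict_apply_self]

theorem measure_smul_add_smul_le_of_add_eq_one {p q : ℝ≥0∞} (hpq : p + q = 1) (ha : a ≤ μ)
    (hb : b ≤ μ) : p • a + q • b ≤ μ :=
  calc p • a + q • b ≤ p • μ + q • μ := by gcongr
    _ = μ := by rw [← add_smul, hpq, one_smul]

end Subtraction

section Overlap

variable {α β : Type*} [MeasurableSpace α] [MeasurableSpace β]

/-- Pushforward along a measurable equivalence, as an isomorphism of lattices of measures. -/
noncomputable def measureMapOrderIso (e : α ≃ᵐ β) : Measure α ≃o Measure β where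
  toFun μ := μ.map e
  invFun μ := μ.map e.symm
  left_inv _ := e.map_symm_map
  right_inv _ := e.map_map_symm
  map_rel_iff' {μ ν} := by
    refine ⟨fun h => ?_, fun h => Measure.map_mono h e.measurable⟩
    simpa using Measure.map_mono h e.symm.measurable

theorem map_inf_measurableEquiv (e : α ≃ᵐ β) (μ ν : Measure α) :
    (μ ⊓ ν).map e = μ.map e ⊓ ν.map e :=
  map_inf (measureMapOrderIso e) μ ν

/-- The common part of a measure and its image under `e`. For `e` the translation by `w` on a
Euclidean space this is the measure `μ_w`. -/
noncomputable def overlap (ν : Measure α) (e : α ≃ᵐ α) : Measure α :=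
  ν ⊓ ν.map e

theorem overlap_le (ν : Measure α) (e : α ≃ᵐ α) : overlap ν e ≤ ν :=
  inf_le_left

theorem map_overlap_symm (ν : Measure α) (e : α ≃ᵐ α) :
    (overlap ν e.symm).map e = overlap ν e := by
  rw [overlap, map_inf_measurableEquiv, e.map_map_symm, inf_comm, overlap]

theorem map_symm_overlap (ν : Measure α) (e : α ≃ᵐ α) :
    (overlap ν e).map e.symm = overlap ν e.symm :=
  map_overlap_symm ν e.symm

theorem half_overlap_add_half_overlap_le (ν : Measure α) (e e' : α ≃ᵐ α) :
    (1 / 2 : ℝ≥0∞) • overlap ν e + (1 / 2 : ℝ≥0∞) • overlap ν e' ≤ ν :=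
  measure_smul_add_smul_le_of_add_eq_one (ENNReal.add_halves 1) (overlap_le ν e)
    (overlap_le ν e')

end Overlap

section Coupling

variable {α : Type*} [MeasurableSpace α]

/-- The refined basic coupling of `ν` with itself along `e`: half of each overlap jumps along `e`
or back along `e.symm`, and the remaining mass stays on the diagonal. For `e` the translation by
`w_κ` this is the measure `ν̃`. -/
noncomputable def refinedBasicCoupling (ν : Measure α) (e : α ≃ᵐ α) : Measure (α × α) :=
  ((1 / 2 : ℝ≥0∞) • overlap ν e.symm).map (fun z => (z, e z))
    + ((1 / 2 : ℝ≥0∞) • overlap ν e).map (fun z => (z, e.symm z))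
    + (ν - (1 / 2 : ℝ≥0∞) • overlap ν e.symm - (1 / 2 : ℝ≥0∞) • overlap ν e).map
      (fun z => (z, z))

theorem fst_refinedBasicCoupling (ν : Measure α) (e : α ≃ᵐ α) :
    (refinedBasicCoupling ν e).fst = ν := by
  simp only [refinedBasicCoupling, Measure.fst_add, Measure.fst_map_prodMk e.measurable,
    Measure.fst_map_prodMk e.symm.measurable, Measure.fst_map_prodMk measurable_id',
    Measure.map_id']
  exact measure_add_add_sub_sub_of_le (half_overlap_add_half_overlap_le ν e.symm e)

theorem snd_refinedBasicCoupling (ν : Measure α) (e : α ≃ᵐ α) :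
    (refinedBasicCoupling ν e).snd = ν := by
  simp only [refinedBasicCoupling, Measure.snd_add, Measure.snd_map_prodMk measurable_id',
    Measure.map_id']
  simp only [Measure.map_smul, map_overlap_symm, map_symm_overlap]
  rw [add_comm ((1 / 2 : ℝ≥0∞) • overlap ν e)]
  exact measure_add_add_sub_sub_of_le (half_overlap_add_half_overlap_le ν e.symm e)

end Coupling

theorem stmt_8_general {α : Type*} [MeasurableSpace α] (ν : Measure α) (e : α ≃ᵐ α) :
    (1 / 2 : ℝ≥0∞) • overlap ν e.symm + (1 / 2 : ℝ≥0∞) • overlap ν e ≤ ν ∧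
    ∀ A B : Set α, MeasurableSet A → MeasurableSet B →
      refinedBasicCoupling ν e (A ×ˢ Set.univ) = ν A ∧
      refinedBasicCoupling ν e (Set.univ ×ˢ B) = ν B := by
  refine ⟨half_overlap_add_half_overlap_le ν e.symm e, fun A B hA hB => ⟨?_, ?_⟩⟩
  · rw [Set.prod_univ, ← Measure.fst_apply hA, fst_refinedBasicCoupling]
  · rw [Set.univ_prod, ← Measure.snd_apply hB, snd_refinedBasicCoupling]

/-- The refined basic coupling jump system defines a coupling operator: for a Lévy measure
`ν`, `κ > 0`, `w ≠ 0` and `w_κ = min(1, κ/|w|)·w`, one has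
`(1/2)μ_{-w_κ} + (1/2)μ_{w_κ} ≤ ν` and the measure
`ν̃ = ((1/2)μ_{-w_κ}).map (z ↦ (z, z+w_κ)) + ((1/2)μ_{w_κ}).map (z ↦ (z, z-w_κ))
  + (ν - (1/2)μ_{-w_κ} - (1/2)μ_{w_κ}).map (z ↦ (z,z))`
has both marginals equal to `ν`. -/
theorem stmt_8 {d : ℕ} (hd : 1 ≤ d) (ν : Measure (EuclideanSpace ℝ (Fin d)))
    [SigmaFinite ν] (hν0 : ν {0} = 0)
    (hν2 : ∫⁻ z, ENNReal.ofReal (min 1 (‖z‖ ^ 2)) ∂ν < ∞)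
    (κ : ℝ) (hκ : 0 < κ) (w : EuclideanSpace ℝ (Fin d)) (hw : w ≠ 0) :
    ((1 / 2 : ℝ≥0∞) • muTrans ν (-(min 1 (κ / ‖w‖) • w))
        + (1 / 2 : ℝ≥0∞) • muTrans ν (min 1 (κ / ‖w‖) • w) ≤ ν) ∧
    ∀ A B : Set (EuclideanSpace ℝ (Fin d)), MeasurableSet A → MeasurableSet B →
      (((1 / 2 : ℝ≥0∞) • muTrans ν (-(min 1 (κ / ‖w‖) • w))).map
          (fun z => (z, z + min 1 (κ / ‖w‖) • w))
        + ((1 / 2 : ℝ≥0∞) • muTrans ν (min 1 (κ / ‖w‖) • w)).map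
          (fun z => (z, z - min 1 (κ / ‖w‖) • w))
        + (ν - (1 / 2 : ℝ≥0∞) • muTrans ν (-(min 1 (κ / ‖w‖) • w))
            - (1 / 2 : ℝ≥0∞) • muTrans ν (min 1 (κ / ‖w‖) • w)).map
          (fun z => (z, z)))
        (A ×ˢ Set.univ) = ν A ∧
      (((1 / 2 : ℝ≥0∞) • muTrans ν (-(min 1 (κ / ‖w‖) • w))).map
          (fun z => (z, z + min 1 (κ / ‖w‖) • w))
        + ((1 / 2 : ℝ≥0∞) • muTrans ν (min 1 (κ / ‖w‖) • w)).map
          (fun z => (z, z - min 1 (κ / ‖w‖) • w))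
        + (ν - (1 / 2 : ℝ≥0∞) • muTrans ν (-(min 1 (κ / ‖w‖) • w))
            - (1 / 2 : ℝ≥0∞) • muTrans ν (min 1 (κ / ‖w‖) • w)).map
          (fun z => (z, z)))
        (Set.univ ×ˢ B) = ν B := by
  simp only [sub_eq_add_neg]
  exact stmt_8_general ν (MeasurableEquiv.addRight (min 1 (κ / ‖w‖) • w))
end
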